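/- If V₀ = 0, there exists a ground state ψ_min ∈ G that is positive, even, and nonincreasing on [0,∞); in particular ψ_min(0) = max_{ξ∈ℝ} ψ_min(ξ). -/

import Mathlib

open MeasureTheory Real

/-- Membership in the energy space `X`. -/
def InX (ψ : ℝ → ℂ) : Prop :=
  Differentiable ℝ ψ ∧
  Integrable (fun ξ : ℝ => ‖ψ ξ‖ ^ 2) ∧
  Integrable (fun ξ : ℝ => ‖deriv ψ ξ‖ ^ 2) ∧
  Integrable (fun ξ : ℝ => ξ ^ 2 * ‖ψ ξ‖ ^ 2) ∧
  Integrable (fun ξ : ℝ => ‖ψ ξ‖ ^ 4)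

/-- Membership in the unit-charge constraint manifold `Σ₁`. -/
def InSigma1 (ψ : ℝ → ℂ) : Prop := InX ψ ∧ (∫ ξ : ℝ, ‖ψ ξ‖ ^ 2) = 1

/-- The Gross–Pitaevskii energy functional with `V₀ = 0`. -/
noncomputable def energy0 (lam : ℝ) (ψ : ℝ → ℂ) : ℝ :=
  (∫ ξ : ℝ, ‖deriv ψ ξ‖ ^ 2) + (∫ ξ : ℝ, ξ ^ 2 * ‖ψ ξ‖ ^ 2)
    + lam / 2 * (∫ ξ : ℝ, ‖ψ ξ‖ ^ 4)

/-
The direct method yields a minimizer of the energy over real functions: the Sobolev inequality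
makes the energy coercive, the trapping potential prevents mass from escaping to infinity, and the
energy is weakly lower semicontinuous. Neither passing to the modulus nor, for complex competitors,
to the real function `‖ψ‖` increases the energy, so the minimizer can be taken nonnegative. It
solves the Euler–Lagrange equation, hence is smooth enough to lie in `X`, and it is positive
because by uniqueness for the Cauchy problem it cannot touch zero.

Symmetry comes from polarization, the two-point version of the symmetric-decreasing rearrangement.
Polarizing at `h > 0` preserves the `L²` and `L⁴` norms and the Dirichlet integral, and it strictly
lowers `∫ x² |f|²` unless `f (2 * h - x) ≤ f x` for all `x < h` already. Hence a minimizer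
satisfies these inequalities for every `h > 0`, and so does its reflection through the origin.
Taking `h = (x + y) / 2` shows that it is nonincreasing on `[0, ∞)`, and letting `h → 0` that it is
even.
-/

namespace GroundState

open Set Filter Topology

/-! ### Locally absolutely continuous functions -/

/-- Functions on the line that are absolutely continuous on every bounded interval: the
regularity of the elements of the energy space. -/
def LocallyAC (f : ℝ → ℝ) : Prop := ∀ a b, AbsolutelyContinuousOnInterval f a b

theorem locallyAC_of_dist_le {E : Type*} [PseudoMetricSpace E] {f : ℝ → ℝ} {g : ℝ → E}
    (hg : ∀ a b, AbsolutelyContinuousOnInterval g a b)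
    (hfg : ∀ x y, dist (f x) (f y) ≤ dist (g x) (g y)) : LocallyAC f := fun a b =>
  squeeze_zero (fun _ => Finset.sum_nonneg fun _ _ => dist_nonneg)
    (fun _ => Finset.sum_le_sum fun _ _ => hfg _ _) (hg a b)

theorem locallyAC_const (c : ℝ) : LocallyAC fun _ => c := fun _ _ =>
  ((LipschitzWith.const c).lipschitzOnWith).absolutelyContinuousOnInterval

theorem locallyIntegrable_of_intervalIntegrable {g : ℝ → ℝ}
    (hg : ∀ a b, IntervalIntegrable g volume a b) : LocallyIntegrable g := fun x =>
  ⟨Ioc (x - 1) (x + 1), Ioc_mem_nhds (by linarith) (by linarith), (hg _ _).1⟩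

theorem locallyAC_of_eq_integral {f g : ℝ → ℝ} {a : ℝ}
    (hg : ∀ a b, IntervalIntegrable g volume a b)
    (hfg : ∀ x, f x = f a + ∫ t in a..x, g t) : LocallyAC f := fun b c => by
  have hprim : f = fun x => f b + ∫ t in b..x, g t := funext fun x => by
    rw [hfg x, hfg b, ← intervalIntegral.integral_add_adjacent_intervals (hg a b) (hg b x),
      add_assoc]
  rw [hprim]
  exact (locallyAC_const _ b c).add
    ((hg b c).absolutelyContinuousOnInterval_intervalIntegral left_mem_uIcc)

theorem deriv_ae_eq_of_eq_integral {f g : ℝ → ℝ} {a : ℝ}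
    (hg : ∀ a b, IntervalIntegrable g volume a b)
    (hfg : ∀ x, f x = f a + ∫ t in a..x, g t) : deriv f =ᵐ[volume] g := by
  filter_upwards [LocallyIntegrable.ae_hasDerivAt_integral
    (locallyIntegrable_of_intervalIntegrable hg)] with x hx
  rw [funext hfg]
  exact ((hx a).const_add _).deriv

namespace LocallyAC

variable {f g : ℝ → ℝ}

theorem continuous (hf : LocallyAC f) : Continuous f :=
  continuous_iff_continuousAt.2 fun x =>
    (hf (x - 1) (x + 1)).continuousOn.continuousAt (by
      rw [uIcc_of_le (by linarith)]
      exact Icc_mem_nhds (by linarith) (by linarith))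

theorem intervalIntegrable_deriv (hf : LocallyAC f) (a b : ℝ) :
    IntervalIntegrable (deriv f) volume a b := (hf a b).intervalIntegrable_deriv

theorem eq_add_integral_deriv (hf : LocallyAC f) (a x : ℝ) :
    f x = f a + ∫ t in a..x, deriv f t := by
  rw [(hf a x).integral_deriv_eq_sub]; ring

theorem ae_differentiableAt (hf : LocallyAC f) : ∀ᵐ x, DifferentiableAt ℝ f x := by
  have hball : ∀ n : ℕ, ∀ᵐ x, x ∈ uIcc (-n : ℝ) n → DifferentiableAt ℝ f x :=
    fun n => (hf _ _).ae_differentiableAt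
  filter_upwards [ae_all_iff.2 hball] with x hx
  obtain ⟨n, hn⟩ := exists_nat_ge |x|
  exact hx n (by rw [uIcc_of_le (by linarith [abs_nonneg x])]; exact abs_le.1 hn)

theorem add (hf : LocallyAC f) (hg : LocallyAC g) : LocallyAC fun x => f x + g x :=
  fun a b => (hf a b).add (hg a b)

theorem sub (hf : LocallyAC f) (hg : LocallyAC g) : LocallyAC fun x => f x - g x :=
  fun a b => (hf a b).sub (hg a b)

theorem mul (hf : LocallyAC f) (hg : LocallyAC g) : LocallyAC fun x => f x * g x :=
  fun a b => (hf a b).mul (hg a b)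

theorem const_mul (c : ℝ) (hf : LocallyAC f) : LocallyAC fun x => c * f x :=
  fun a b => (hf a b).const_mul c

theorem abs (hf : LocallyAC f) : LocallyAC fun x => |f x| :=
  locallyAC_of_dist_le hf fun x y => abs_abs_sub_abs_le (f x) (f y)

theorem max (hf : LocallyAC f) (hg : LocallyAC g) : LocallyAC fun x => max (f x) (g x) := by
  simp only [sup_eq_half_smul_add_add_abs_sub' ℝ, smul_eq_mul]
  exact ((hf.add hg).add (hg.sub hf).abs).const_mul _

theorem min (hf : LocallyAC f) (hg : LocallyAC g) : LocallyAC fun x => min (f x) (g x) := by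
  have hmin : (fun x => Min.min (f x) (g x)) = fun x => f x + g x - Max.max (f x) (g x) :=
    funext fun x => eq_sub_of_add_eq (min_add_max _ _)
  rw [hmin]
  exact (hf.add hg).sub (hf.max hg)

theorem comp_const_sub (hf : LocallyAC f) (c : ℝ) : LocallyAC fun x => f (c - x) := by
  refine locallyAC_of_eq_integral (g := fun t => -deriv f (c - t)) (a := 0)
    (fun a b => ?_) fun x => ?_
  · simpa [Pi.neg_def] using
      ((hf.intervalIntegrable_deriv (c - a) (c - b)).comp_sub_left c).neg
  · simp only [intervalIntegral.integral_neg, intervalIntegral.integral_comp_sub_left, sub_zero]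
    rw [(hf _ _).integral_deriv_eq_sub]; ring

theorem comp_min (hf : LocallyAC f) (c : ℝ) : LocallyAC fun x => f (Min.min x c) := by
  refine locallyAC_of_eq_integral (g := {x | x ≤ c}.indicator (deriv f)) (a := c)
    (fun a b => ⟨(hf.intervalIntegrable_deriv a b).1.indicator measurableSet_Iic,
      (hf.intervalIntegrable_deriv a b).2.indicator measurableSet_Iic⟩) fun x => ?_
  rcases le_total x c with hx | hx
  · rw [intervalIntegral.integral_symm, intervalIntegral.integral_congr_ae (g := deriv f)]
    · rw [min_eq_left hx, min_self, ← intervalIntegral.integral_symm]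
      exact hf.eq_add_integral_deriv c x
    · filter_upwards with t ht
      rw [uIoc_of_le hx] at ht
      exact indicator_of_mem (s := {x | x ≤ c}) ht.2 _
  · rw [intervalIntegral.integral_indicator ⟨le_rfl, hx⟩]
    simp [hx]

theorem comp_max (hf : LocallyAC f) (c : ℝ) : LocallyAC fun x => f (Max.max x c) := by
  have h := ((hf.add (locallyAC_const (f c))).sub (hf.comp_min c))
  convert h using 2 with x
  rcases le_total x c with hx | hx <;> simp [hx]

theorem ite_lt (hf : LocallyAC f) (hg : LocallyAC g) {c : ℝ} (hfg : f c = g c) :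
    LocallyAC fun x => if x < c then f x else g x := by
  have hglue : (fun x => if x < c then f x else g x) =
      fun x => f (Min.min x c) + g (Max.max x c) - f c := by
    funext x
    split_ifs with hx
    · simp [hx.le, hfg]
    · simp [not_lt.1 hx]
  rw [hglue]
  exact ((hf.comp_min c).add (hg.comp_max c)).sub (locallyAC_const _)

end LocallyAC

theorem norm_deriv_le_of_norm_sub_le {E F : Type*} [NormedAddCommGroup E] [NormedSpace ℝ E]
    [NormedAddCommGroup F] [NormedSpace ℝ F] {f : ℝ → E} {g : ℝ → F} {x : ℝ}
    (hg : DifferentiableAt ℝ g x) (hfg : ∀ y, ‖f y - f x‖ ≤ ‖g y - g x‖) :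
    ‖deriv f x‖ ≤ ‖deriv g x‖ := by
  by_cases hf : DifferentiableAt ℝ f x
  · refine le_of_tendsto_of_tendsto' (hasDerivAt_iff_tendsto_slope.1 hf.hasDerivAt).norm
      (hasDerivAt_iff_tendsto_slope.1 hg.hasDerivAt).norm fun y => ?_
    simp only [slope_def_module, norm_smul]
    exact mul_le_mul_of_nonneg_left (hfg y) (norm_nonneg _)
  · simp [deriv_zero_of_not_differentiableAt hf]

theorem deriv_eq_of_eventually_le {u w : ℝ → ℝ} {x : ℝ} (hu : DifferentiableAt ℝ u x)
    (hw : DifferentiableAt ℝ w x) (hle : ∀ᶠ y in 𝓝 x, u y ≤ w y) (hx : u x = w x) :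
    deriv u x = deriv w x := by
  have hmin : IsLocalMin (fun y => w y - u y) x := by
    filter_upwards [hle] with y hy
    rw [hx, sub_self]
    exact sub_nonneg.2 hy
  have hzero := hmin.deriv_eq_zero
  rw [deriv_fun_sub hw hu] at hzero
  linarith

theorem locallyAC_norm {E : Type*} [NormedAddCommGroup E] [NormedSpace ℝ E] [CompleteSpace E]
    {ψ : ℝ → E} (hψ : Differentiable ℝ ψ)
    (hψ' : ∀ a b, IntervalIntegrable (deriv ψ) volume a b) : LocallyAC fun x => ‖ψ x‖ := by
  have hlen : LocallyAC fun x => ∫ t in (0 : ℝ)..x, ‖deriv ψ t‖ :=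
    locallyAC_of_eq_integral (a := 0) (fun a b => (hψ' a b).norm) fun x => by simp
  refine locallyAC_of_dist_le hlen fun x y => ?_
  calc dist ‖ψ x‖ ‖ψ y‖ ≤ ‖ψ x - ψ y‖ := abs_norm_sub_norm_le _ _
    _ = ‖∫ t in y..x, deriv ψ t‖ := by
      rw [intervalIntegral.integral_deriv_eq_sub (fun t _ => hψ t) (hψ' y x)]
    _ ≤ |∫ t in y..x, ‖deriv ψ t‖| := intervalIntegral.norm_integral_le_abs_integral_norm
    _ = dist (∫ t in (0 : ℝ)..x, ‖deriv ψ t‖) (∫ t in (0 : ℝ)..y, ‖deriv ψ t‖) := by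
      rw [Real.dist_eq, intervalIntegral.integral_interval_sub_left
        (hψ' _ _).norm (hψ' _ _).norm]

theorem LocallyAC.sq_sub_sq_le {f : ℝ → ℝ} (hf : LocallyAC f) (hf2 : MemLp f 2)
    (hf' : MemLp (deriv f) 2) {δ : ℝ} (hδ : 0 < δ) (x y : ℝ) :
    f x ^ 2 - f y ^ 2 ≤ (∫ t, f t ^ 2) / δ + δ * ∫ t, deriv f t ^ 2 := by
  have hderiv : deriv (fun t => f t * f t) =ᵐ[volume] fun t => 2 * f t * deriv f t := by
    filter_upwards [hf.ae_differentiableAt] with t ht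
    rw [deriv_fun_mul ht ht]; ring
  have hint : Integrable fun t => f t ^ 2 / δ + δ * deriv f t ^ 2 :=
    (hf2.integrable_sq.div_const δ).add (hf'.integrable_sq.const_mul δ)
  have hamgm : ∀ t, ‖2 * f t * deriv f t‖ ≤ f t ^ 2 / δ + δ * deriv f t ^ 2 := fun t => by
    have hsq : f t ^ 2 / δ + δ * deriv f t ^ 2 - 2 * |f t| * |deriv f t| =
        (|f t| - δ * |deriv f t|) ^ 2 / δ := by
      rw [← sq_abs (f t), ← sq_abs (deriv f t)]
      field_simp
      ring
    rw [norm_mul, norm_mul, Real.norm_eq_abs, Real.norm_eq_abs, Real.norm_eq_abs, abs_two]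
    exact sub_nonneg.1 (hsq ▸ by positivity)
  calc f x ^ 2 - f y ^ 2 = ∫ t in y..x, deriv (fun t => f t * f t) t := by
        rw [((hf.mul hf) y x).integral_deriv_eq_sub]; ring
    _ = ∫ t in y..x, 2 * f t * deriv f t :=
      intervalIntegral.integral_congr_ae (hderiv.mono fun t ht _ => ht)
    _ ≤ ∫ t in uIoc y x, ‖2 * f t * deriv f t‖ :=
      (Real.le_norm_self _).trans intervalIntegral.norm_integral_le_integral_norm_uIoc
    _ ≤ ∫ t in uIoc y x, (f t ^ 2 / δ + δ * deriv f t ^ 2) :=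
      integral_mono_of_nonneg (ae_of_all _ fun _ => norm_nonneg _) hint.integrableOn
        (ae_of_all _ hamgm)
    _ ≤ ∫ t, (f t ^ 2 / δ + δ * deriv f t ^ 2) :=
      setIntegral_le_integral hint (ae_of_all _ fun t => (norm_nonneg _).trans (hamgm t))
    _ = (∫ t, f t ^ 2) / δ + δ * ∫ t, deriv f t ^ 2 := by
      rw [integral_add (hf2.integrable_sq.div_const δ) (hf'.integrable_sq.const_mul δ),
        integral_div, integral_const_mul]

theorem LocallyAC.sq_le {f : ℝ → ℝ} (hf : LocallyAC f) (hf2 : MemLp f 2)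
    (hf' : MemLp (deriv f) 2) {δ : ℝ} (hδ : 0 < δ) (x : ℝ) :
    f x ^ 2 ≤ (∫ t, f t ^ 2) / δ + δ * ∫ t, deriv f t ^ 2 := by
  set C := (∫ t, f t ^ 2) / δ + δ * ∫ t, deriv f t ^ 2
  by_contra! hC
  have hconst : Integrable fun _ : ℝ => f x ^ 2 - C :=
    hf2.integrable_sq.mono' aestronglyMeasurable_const (ae_of_all _ fun y => by
      rw [Real.norm_of_nonneg (by linarith)]
      linarith [hf.sq_sub_sq_le hf2 hf' hδ x y])
  rcases integrable_const_iff.1 hconst with h | h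
  · linarith
  · exact measure_ne_top volume univ Real.volume_univ

/-! ### Limits and derivatives of integrals -/

theorem exists_subseq_tendsto_inner {H : Type*} [NormedAddCommGroup H] [InnerProductSpace ℝ H]
    [CompleteSpace H] [TopologicalSpace.SeparableSpace H] {u : ℕ → H} {C : ℝ}
    (hu : ∀ n, ‖u n‖ ≤ C) : ∃ (v : H) (φ : ℕ → ℕ), StrictMono φ ∧
      ∀ w, Tendsto (fun n => inner ℝ (u (φ n)) w) atTop (𝓝 (inner ℝ v w)) := by
  have hmem : ∀ n, StrongDual.toWeakDual (InnerProductSpace.toDual ℝ H (u n)) ∈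
      WeakDual.toStrongDual ⁻¹' Metric.closedBall (0 : StrongDual ℝ H) C := fun n => by
    simpa using hu n
  obtain ⟨ℓ, -, φ, hφ, hlim⟩ := WeakDual.isSeqCompact_closedBall ℝ H 0 C hmem
  refine ⟨(InnerProductSpace.toDual ℝ H).symm (WeakDual.toStrongDual ℓ), φ, hφ, fun w => ?_⟩
  rw [InnerProductSpace.toDual_symm_apply]
  exact tendsto_iff_forall_eval_tendsto_topDualPairing.1 hlim w

section Measure

variable {α : Type*} [MeasurableSpace α] {μ : Measure α}

theorem exists_subseq_tendsto_integral_mul [IsSeparable μ] {u : ℕ → α → ℝ} {C : ℝ}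
    (hu : ∀ n, MemLp (u n) 2 μ) (hC : ∀ n, ∫ x, u n x ^ 2 ∂μ ≤ C) :
    ∃ (v : α → ℝ) (φ : ℕ → ℕ), MemLp v 2 μ ∧ StrictMono φ ∧ ∀ w, MemLp w 2 μ →
      Tendsto (fun n => ∫ x, u (φ n) x * w x ∂μ) atTop (𝓝 (∫ x, v x * w x ∂μ)) := by
  have hinner : ∀ {f g : α → ℝ} (hf : MemLp f 2 μ) (hg : MemLp g 2 μ),
      inner ℝ hf.toLp hg.toLp = ∫ x, f x * g x ∂μ := fun hf hg => by
    rw [L2.inner_def]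
    refine integral_congr_ae ?_
    filter_upwards [hf.coeFn_toLp, hg.coeFn_toLp] with x hfx hgx
    rw [hfx, hgx, real_inner_comm]
    rfl
  have hnorm : ∀ n, ‖(hu n).toLp‖ ≤ √C := fun n => by
    refine Real.le_sqrt_of_sq_le ?_
    rw [← real_inner_self_eq_norm_sq, hinner]
    simpa only [sq] using hC n
  have : Fact ((2 : ENNReal) ≠ ⊤) := ⟨ENNReal.ofNat_ne_top⟩
  obtain ⟨v, φ, hφ, hlim⟩ := exists_subseq_tendsto_inner hnorm
  refine ⟨v, φ, Lp.memLp v, hφ, fun w hw => ?_⟩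
  simpa only [← hinner, Lp.toLp_coeFn, Lp.memLp v, hw, hu] using hlim hw.toLp

theorem integral_sq_le_of_tendsto_integral_mul {u : ℕ → α → ℝ} {v : α → ℝ} {b : ℕ → ℝ} {B : ℝ}
    (hu : ∀ n, MemLp (u n) 2 μ) (hv : MemLp v 2 μ)
    (hlim : Tendsto (fun n => ∫ x, u n x * v x ∂μ) atTop (𝓝 (∫ x, v x * v x ∂μ)))
    (hb : ∀ n, ∫ x, u n x ^ 2 ∂μ ≤ b n) (hB : Tendsto b atTop (𝓝 B)) :
    ∫ x, v x ^ 2 ∂μ ≤ B := by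
  have hbound : ∀ n, 2 * ∫ x, u n x * v x ∂μ ≤ b n + ∫ x, v x ^ 2 ∂μ := fun n => by
    refine le_trans ?_ (add_le_add_left (hb n) _)
    rw [← integral_const_mul, ← integral_add (hu n).integrable_sq hv.integrable_sq]
    refine integral_mono (((hu n).integrable_mul hv).const_mul 2)
      ((hu n).integrable_sq.add hv.integrable_sq) fun x => ?_
    linarith [two_mul_le_add_sq (u n x) (v x)]
  have h := le_of_tendsto_of_tendsto' (hlim.const_mul 2) (hB.add_const _) hbound
  simp only [← sq] at h
  linarith

theorem integrable_and_integral_le_of_tendsto {u : ℕ → α → ℝ} {v : α → ℝ} {b : ℕ → ℝ} {B : ℝ}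
    (hu : ∀ n, Integrable (u n) μ) (hpos : ∀ n x, 0 ≤ u n x)
    (hlim : ∀ x, Tendsto (fun n => u n x) atTop (𝓝 (v x)))
    (hb : ∀ n, ∫ x, u n x ∂μ ≤ b n) (hB : Tendsto b atTop (𝓝 B)) :
    Integrable v μ ∧ ∫ x, v x ∂μ ≤ B := by
  have hvpos : ∀ x, 0 ≤ v x := fun x => ge_of_tendsto' (hlim x) fun n => hpos n x
  have hvmeas : AEStronglyMeasurable v μ :=
    aestronglyMeasurable_of_tendsto_ae atTop (fun n => (hu n).1) (ae_of_all _ hlim)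
  have hfatou : ∫⁻ x, ENNReal.ofReal (v x) ∂μ ≤ ENNReal.ofReal B :=
    calc ∫⁻ x, ENNReal.ofReal (v x) ∂μ
        = ∫⁻ x, liminf (fun n => ENNReal.ofReal (u n x)) atTop ∂μ :=
          lintegral_congr fun x => (ENNReal.tendsto_ofReal (hlim x)).liminf_eq.symm
      _ ≤ liminf (fun n => ∫⁻ x, ENNReal.ofReal (u n x) ∂μ) atTop :=
          lintegral_liminf_le' fun n => (hu n).1.aemeasurable.ennreal_ofReal
      _ ≤ liminf (fun n => ENNReal.ofReal (b n)) atTop :=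
          liminf_le_liminf (Eventually.of_forall fun n => by
            rw [← ofReal_integral_eq_lintegral_ofReal (hu n) (ae_of_all _ (hpos n))]
            exact ENNReal.ofReal_le_ofReal (hb n))
      _ = ENNReal.ofReal B := (ENNReal.tendsto_ofReal hB).liminf_eq
  refine ⟨⟨hvmeas, ?_⟩, ?_⟩
  · rw [hasFiniteIntegral_iff_ofReal (ae_of_all _ hvpos)]
    exact hfatou.trans_lt ENNReal.ofReal_lt_top
  · rw [integral_eq_lintegral_of_nonneg_ae (ae_of_all _ hvpos) hvmeas]
    exact ENNReal.toReal_le_of_le_ofReal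
      (ge_of_tendsto' hB fun n => (integral_nonneg (hpos n)).trans (hb n)) hfatou

theorem ae_eq_const_of_integral_mul_eq_zero [IsFiniteMeasure μ] {f : α → ℝ} (hf : MemLp f 2 μ)
    (h : ∀ η, MemLp η 2 μ → ∫ x, η x ∂μ = 0 → ∫ x, f x * η x ∂μ = 0) :
    ∃ c, ∀ᵐ x ∂μ, f x = c := by
  set c := ⨍ x, f x ∂μ
  have hη : MemLp (fun x => f x - c) 2 μ := hf.sub (memLp_const c)
  have hmean : ∫ x, (f x - c) ∂μ = 0 := integral_sub_average μ f
  have hsq : ∫ x, (f x - c) ^ 2 ∂μ = 0 :=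
    calc ∫ x, (f x - c) ^ 2 ∂μ = ∫ x, (f x * (f x - c) - c * (f x - c)) ∂μ := by
          congr 1; ext x; ring
      _ = 0 := by
          rw [integral_sub (f := fun x => f x * (f x - c)) (hf.integrable_mul hη)
            ((hη.integrable one_le_two).const_mul c), integral_const_mul, hmean, h _ hη hmean]
          simp
  refine ⟨c, ?_⟩
  filter_upwards [(integral_eq_zero_iff_of_nonneg (fun x => sq_nonneg _) hη.integrable_sq).1 hsq]
    with x hx
  exact sub_eq_zero.1 (pow_eq_zero_iff two_ne_zero |>.1 hx)

theorem measurePreserving_piecewise_id {σ : α → α} (hσ : MeasurePreserving σ μ μ) {s : Set α}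
    [DecidablePred (· ∈ s)] (hs : MeasurableSet s) (hsσ : σ ⁻¹' s = s) :
    MeasurePreserving (s.piecewise σ id) μ μ := by
  refine ⟨hσ.measurable.piecewise hs measurable_id, Measure.ext fun t ht => ?_⟩
  rw [Measure.map_apply (hσ.measurable.piecewise hs measurable_id) ht, piecewise_preimage,
    Set.ite, ← measure_inter_add_sdiff t hs, preimage_id]
  have hσt : σ ⁻¹' t ∩ s = σ ⁻¹' (t ∩ s) := by rw [preimage_inter, hsσ]
  rw [measure_union (disjoint_sdiff_right.mono_left inter_subset_right) (ht.diff hs), hσt,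
    hσ.measure_preimage (ht.inter hs).nullMeasurableSet]

theorem integral_comp_of_measurePreserving {β : Type*} [MeasurableSpace β] {ν : Measure β}
    {τ : α → β} (hτ : MeasurePreserving τ μ ν) {g : β → ℝ} (hg : AEStronglyMeasurable g ν) :
    ∫ x, g (τ x) ∂μ = ∫ y, g y ∂ν := by
  rw [← hτ.map_eq] at hg ⊢
  exact (integral_map hτ.aemeasurable hg).symm

theorem integrable_pow_of_memLp {f : α → ℝ} {n : ℕ} (hf : MemLp f n μ) (hn : n ≠ 0) :
    Integrable (fun x => f x ^ n) μ :=
  (integrable_norm_iff (hf.1.pow n)).1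
    ((hf.integrable_norm_pow hn).congr (ae_of_all _ fun x => (norm_pow (f x) n).symm))

theorem hasDerivAt_integral_add_mul_pow {n : ℕ} (hn : n ≠ 0) {u v : α → ℝ} (hu : MemLp u n μ)
    (hv : MemLp v n μ) :
    HasDerivAt (fun t : ℝ => ∫ x, (u x + t * v x) ^ n ∂μ)
      (n * ∫ x, u x ^ (n - 1) * v x ∂μ) 0 := by
  have hmem : ∀ t : ℝ, MemLp (fun x => u x + t * v x) n μ := fun t => hu.add (hv.const_mul t)
  have hbound : Integrable (fun x => n * (|u x| + |v x|) ^ n) μ := by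
    refine Integrable.const_mul ?_ _
    refine ((hu.abs.add hv.abs).integrable_norm_pow hn).congr (ae_of_all _ fun x => ?_)
    simp [abs_of_nonneg (add_nonneg (abs_nonneg (u x)) (abs_nonneg (v x)))]
  have key := (hasDerivAt_integral_of_dominated_loc_of_deriv_le (μ := μ) (x₀ := (0 : ℝ))
    (F := fun t x => (u x + t * v x) ^ n)
    (F' := fun t x => n * (u x + t * v x) ^ (n - 1) * v x)
    (bound := fun x => n * (|u x| + |v x|) ^ n) (Metric.ball_mem_nhds 0 one_pos)
    (Eventually.of_forall fun t => (hmem t).1.pow n) ?_ ?_ ?_ hbound ?_).2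
  · simpa [mul_assoc, integral_const_mul] using key
  · exact integrable_pow_of_memLp (hmem 0) hn
  · exact (((hmem 0).1.pow _).const_mul _).mul hv.1
  · refine ae_of_all _ fun x t ht => ?_
    have ht' : |t| ≤ 1 := by simpa using (mem_ball_zero_iff.1 ht).le
    have hle : |u x + t * v x| ≤ |u x| + |v x| :=
      (abs_add_le _ _).trans (add_le_add_right (by
        rw [abs_mul]; exact mul_le_of_le_one_left (abs_nonneg _) ht') _)
    rw [norm_mul, norm_mul, norm_pow, Real.norm_natCast, mul_assoc]
    refine mul_le_mul_of_nonneg_left ?_ n.cast_nonneg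
    rw [← pow_sub_one_mul hn]
    exact mul_le_mul (pow_le_pow_left₀ (abs_nonneg _) hle _)
      (le_add_of_nonneg_left (abs_nonneg _)) (abs_nonneg _) (by positivity)
  · refine ae_of_all _ fun x t _ => ?_
    simpa using (((hasDerivAt_id t).mul_const (v x)).const_add (u x)).fun_pow n

section Tight

variable {u : ℕ → α → ℝ} {v V : α → ℝ} {B K m : ℝ}

theorem le_integral_add_of_tendsto_of_tight
    (hV : Measurable V) (hVpos : ∀ x, 0 ≤ V x) (hVfin : ∀ r, μ {x | V x ≤ r} < ⊤)
    (hu : ∀ n, Integrable (u n) μ) (hVu : ∀ n, Integrable (fun x => V x * u n x) μ)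
    (hpos : ∀ n x, 0 ≤ u n x) (hB : ∀ n x, u n x ≤ B) (hK : ∀ n, ∫ x, V x * u n x ∂μ ≤ K)
    (hlim : ∀ x, Tendsto (fun n => u n x) atTop (𝓝 (v x)))
    (hm : Tendsto (fun n => ∫ x, u n x ∂μ) atTop (𝓝 m)) {ε : ℝ} (hε : 0 < ε) :
    m ≤ (∫ x, v x ∂μ) + ε * K := by
  obtain ⟨hv, -⟩ := integrable_and_integral_le_of_tendsto hu hpos hlim (fun n => le_rfl) hm
  obtain ⟨hVv, -⟩ := integrable_and_integral_le_of_tendsto hVu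
    (fun n x => mul_nonneg (hVpos x) (hpos n x)) (fun x => (hlim x).const_mul _) hK
    tendsto_const_nhds
  set c : α → ℝ := {x | V x ≤ ε⁻¹}.indicator fun _ => B
  have hc : Integrable c μ :=
    (integrableOn_const (hVfin _).ne).integrable_indicator (measurableSet_le hV measurable_const)
  have hsplit : ∀ f : α → ℝ, Integrable f μ → Integrable (fun x => V x * f x) μ →
      Integrable (fun x => ε * (V x * f x) - f x + c x) μ ∧
      ∫ x, (ε * (V x * f x) - f x + c x) ∂μ =
        ε * (∫ x, V x * f x ∂μ) - (∫ x, f x ∂μ) + ∫ x, c x ∂μ := fun f hf hVf => by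
    have hdiff : Integrable (fun x => ε * (V x * f x) - f x) μ := (hVf.const_mul ε).sub hf
    exact ⟨hdiff.add hc, by
      rw [integral_add hdiff hc, integral_sub (hVf.const_mul ε) hf, integral_const_mul]⟩
  have hnonneg : ∀ n x, 0 ≤ ε * (V x * u n x) - u n x + c x := fun n x => by
    by_cases hx : V x ≤ ε⁻¹
    · have hcx : c x = B := indicator_of_mem (s := {x | V x ≤ ε⁻¹}) hx _
      have := mul_nonneg hε.le (mul_nonneg (hVpos x) (hpos n x))
      linarith [hB n x]
    · have hcx : c x = 0 := indicator_of_notMem (s := {x | V x ≤ ε⁻¹}) hx _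
      have hVx : 1 ≤ ε * V x := (inv_le_iff_one_le_mul₀' hε).1 (not_le.1 hx).le
      nlinarith [hpos n x]
  -- Fatou's lemma for the nonnegative functions `ε V uₙ - uₙ + B 1_{V ≤ 1 / ε}`.
  have hfatou := (integrable_and_integral_le_of_tendsto
    (fun n => (hsplit _ (hu n) (hVu n)).1) hnonneg
    (fun x => ((((hlim x).const_mul (V x)).const_mul ε).sub (hlim x)).add_const (c x))
    (fun n => ((hsplit _ (hu n) (hVu n)).2.trans_le (by gcongr; exact hK n)))
    ((hm.const_sub (ε * K)).add_const (∫ x, c x ∂μ))).2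
  rw [(hsplit v hv hVv).2] at hfatou
  have := mul_nonneg hε.le (integral_nonneg fun x => mul_nonneg (hVpos x)
    (ge_of_tendsto' (hlim x) fun n => hpos n x) : 0 ≤ ∫ x, V x * v x ∂μ)
  linarith

theorem integral_eq_of_tendsto_of_tight
    (hV : Measurable V) (hVpos : ∀ x, 0 ≤ V x) (hVfin : ∀ r, μ {x | V x ≤ r} < ⊤)
    (hu : ∀ n, Integrable (u n) μ) (hVu : ∀ n, Integrable (fun x => V x * u n x) μ)
    (hpos : ∀ n x, 0 ≤ u n x) (hB : ∀ n x, u n x ≤ B) (hK : ∀ n, ∫ x, V x * u n x ∂μ ≤ K)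
    (hlim : ∀ x, Tendsto (fun n => u n x) atTop (𝓝 (v x)))
    (hm : Tendsto (fun n => ∫ x, u n x ∂μ) atTop (𝓝 m)) : ∫ x, v x ∂μ = m := by
  refine le_antisymm
    (integrable_and_integral_le_of_tendsto hu hpos hlim (fun n => le_rfl) hm).2 ?_
  have hlim0 : Tendsto (fun ε : ℝ => (∫ x, v x ∂μ) + ε * K) (𝓝[>] 0) (𝓝 (∫ x, v x ∂μ)) := by
    have h := (by fun_prop : Continuous fun ε : ℝ => (∫ x, v x ∂μ) + ε * K).tendsto 0
    simp only [zero_mul, add_zero] at h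
    exact h.mono_left nhdsWithin_le_nhds
  exact ge_of_tendsto hlim0 (eventually_mem_nhdsWithin.mono fun ε hε =>
    le_integral_add_of_tendsto_of_tight hV hVpos hVfin hu hVu hpos hB hK hlim hm hε)

end Tight

end Measure

/-! ### The real energy space -/

/-- The real form of the energy space `X`, with a distributional derivative in `L²` encoded as
local absolute continuity together with an `L²` bound on the a.e. derivative. -/
structure MemEnergySpace (f : ℝ → ℝ) : Prop where
  ac : LocallyAC f
  memLp : MemLp f 2
  memLp_deriv : MemLp (deriv f) 2
  memLp_id_mul : MemLp (fun x => x * f x) 2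

/-- The Gross–Pitaevskii energy of a real function with respect to the coupling `lam`. -/
noncomputable def energy (lam : ℝ) (f : ℝ → ℝ) : ℝ :=
  (∫ x, deriv f x ^ 2) + (∫ x, (x * f x) ^ 2) + lam / 2 * ∫ x, f x ^ 4

namespace MemEnergySpace

variable {f g : ℝ → ℝ}

theorem const_mul (c : ℝ) (hf : MemEnergySpace f) : MemEnergySpace fun x => c * f x where
  ac := hf.ac.const_mul c
  memLp := hf.memLp.const_mul c
  memLp_deriv := by
    simp only [funext fun x => deriv_const_mul_field (x := x) (v := f) c]
    exact hf.memLp_deriv.const_mul c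
  memLp_id_mul := by
    simpa only [mul_left_comm c] using hf.memLp_id_mul.const_mul c

theorem add (hf : MemEnergySpace f) (hg : MemEnergySpace g) :
    MemEnergySpace fun x => f x + g x where
  ac := hf.ac.add hg.ac
  memLp := hf.memLp.add hg.memLp
  memLp_deriv := by
    refine (memLp_congr_ae ?_).2 (hf.memLp_deriv.add hg.memLp_deriv)
    filter_upwards [hf.ac.ae_differentiableAt, hg.ac.ae_differentiableAt] with x hfx hgx
    exact deriv_fun_add hfx hgx
  memLp_id_mul := by
    simp only [mul_add]
    exact hf.memLp_id_mul.add hg.memLp_id_mul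

theorem norm_deriv_abs_le (hf : MemEnergySpace f) :
    ∀ᵐ x, ‖deriv (fun y => |f y|) x‖ ≤ ‖deriv f x‖ := by
  filter_upwards [hf.ac.ae_differentiableAt] with x hx
  exact norm_deriv_le_of_norm_sub_le hx fun y => abs_abs_sub_abs_le (f y) (f x)

theorem abs (hf : MemEnergySpace f) : MemEnergySpace fun x => |f x| where
  ac := hf.ac.abs
  memLp := hf.memLp.abs
  memLp_deriv := hf.memLp_deriv.mono (aestronglyMeasurable_deriv _ _) hf.norm_deriv_abs_le
  memLp_id_mul := hf.memLp_id_mul.mono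
    ((continuous_id.mul hf.ac.abs.continuous).aestronglyMeasurable)
    (ae_of_all _ fun x => by simp)

theorem exists_sq_le (hf : MemEnergySpace f) : ∃ B, ∀ x, f x ^ 2 ≤ B :=
  ⟨_, fun x => hf.ac.sq_le hf.memLp hf.memLp_deriv one_pos x⟩

theorem integrable_pow_four (hf : MemEnergySpace f) : Integrable fun x => f x ^ 4 := by
  obtain ⟨B, hB⟩ := hf.exists_sq_le
  refine (hf.memLp.integrable_sq.const_mul B).mono'
    (hf.ac.continuous.pow 4).aestronglyMeasurable (ae_of_all _ fun x => ?_)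
  rw [norm_pow, Real.norm_eq_abs]
  nlinarith [hB x, sq_nonneg (f x), sq_abs (f x)]

theorem memLp_four (hf : MemEnergySpace f) : MemLp f 4 := by
  refine (integrable_norm_rpow_iff hf.memLp.1 (by norm_num) (by norm_num)).1 ?_
  refine hf.integrable_pow_four.congr (ae_of_all _ fun x => ?_)
  have h4 : (4 : ENNReal).toReal = (4 : ℕ) := by norm_num
  simp only [h4, rpow_natCast, Real.norm_eq_abs, Even.pow_abs (by decide : Even 4)]

theorem integral_pow_four_le (hf : MemEnergySpace f) {δ : ℝ} (hδ : 0 < δ) :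
    ∫ x, f x ^ 4 ≤
      ((∫ x, f x ^ 2) / δ + δ * ∫ x, deriv f x ^ 2) * ∫ x, f x ^ 2 := by
  rw [← integral_const_mul]
  refine integral_mono hf.integrable_pow_four (hf.memLp.integrable_sq.const_mul _) fun x => ?_
  calc f x ^ 4 = f x ^ 2 * f x ^ 2 := by ring
    _ ≤ _ := mul_le_mul_of_nonneg_right (hf.ac.sq_le hf.memLp hf.memLp_deriv hδ x) (sq_nonneg _)

theorem le_energy (hf : MemEnergySpace f) (hnorm : ∫ x, f x ^ 2 = 1) (lam : ℝ) :
    (∫ x, deriv f x ^ 2) / 2 + (∫ x, (x * f x) ^ 2) - |lam| * (|lam| + 1) / 2 ≤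
      energy lam f := by
  have hδ : 0 < |lam| + 1 := by positivity
  have hD : 0 ≤ ∫ x, deriv f x ^ 2 := integral_nonneg fun x => sq_nonneg _
  have hN : 0 ≤ ∫ x, f x ^ 4 := integral_nonneg fun x => by positivity
  have hN' : ∫ x, f x ^ 4 ≤ (|lam| + 1) + (|lam| + 1)⁻¹ * ∫ x, deriv f x ^ 2 := by
    simpa [hnorm] using hf.integral_pow_four_le (inv_pos.2 hδ)
  have hlam : |lam| * (|lam| + 1)⁻¹ ≤ 1 := by
    rw [← div_eq_mul_inv, div_le_one hδ]; linarith
  have hquartic : |lam| * ∫ x, f x ^ 4 ≤ |lam| * (|lam| + 1) + ∫ x, deriv f x ^ 2 :=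
    calc |lam| * ∫ x, f x ^ 4
        ≤ |lam| * ((|lam| + 1) + (|lam| + 1)⁻¹ * ∫ x, deriv f x ^ 2) := by gcongr
      _ = |lam| * (|lam| + 1) + (|lam| * (|lam| + 1)⁻¹) * ∫ x, deriv f x ^ 2 := by ring
      _ ≤ _ := by gcongr; exact mul_le_of_le_one_left hD hlam
  have hsign : -(|lam| * ∫ x, f x ^ 4) ≤ lam * ∫ x, f x ^ 4 := by
    rw [← neg_mul]; exact mul_le_mul_of_nonneg_right (neg_abs_le lam) hN
  unfold energy
  linarith

end MemEnergySpace

theorem LocallyAC.memEnergySpace_of_hasCompactSupport {f : ℝ → ℝ} (hf : LocallyAC f)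
    (hf' : MemLp (deriv f) 2) (hsupp : HasCompactSupport f) : MemEnergySpace f where
  ac := hf
  memLp := hf.continuous.memLp_of_hasCompactSupport hsupp
  memLp_deriv := hf'
  memLp_id_mul := (continuous_id.mul hf.continuous).memLp_of_hasCompactSupport hsupp.mul_left

theorem integral_sq_normalize {f : ℝ → ℝ} (hf : 0 < ∫ x, f x ^ 2) :
    ∫ x, ((√(∫ y, f y ^ 2))⁻¹ * f x) ^ 2 = 1 := by
  simp only [mul_pow, integral_const_mul]
  rw [inv_pow, sq_sqrt hf.le, inv_mul_cancel₀ hf.ne']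

theorem exists_memEnergySpace_integral_sq_eq_one :
    ∃ f, MemEnergySpace f ∧ ∫ x, f x ^ 2 = 1 := by
  let b : ContDiffBump (0 : ℝ) := ⟨1, 2, one_pos, one_lt_two⟩
  have hb1 : ContDiff ℝ 1 b := b.contDiff
  have hb : MemEnergySpace b := LocallyAC.memEnergySpace_of_hasCompactSupport
    (fun _ _ => hb1.contDiffOn.absolutelyContinuousOnInterval)
    (hb1.continuous_deriv_one.memLp_of_hasCompactSupport b.hasCompactSupport.deriv)
    b.hasCompactSupport
  have hb0 : b 0 ^ 2 ≠ 0 := pow_ne_zero 2 (b.pos_of_mem_ball (by simp [b])).ne'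
  exact ⟨_, hb.const_mul _, integral_sq_normalize
    (integral_pos_of_integrable_nonneg_nonzero (b.continuous.pow 2) hb.memLp.integrable_sq
      (fun _ => sq_nonneg _) hb0)⟩

theorem intervalIntegrable_of_memLp {E : Type*} [NormedAddCommGroup E] {f : ℝ → E} {p : ENNReal}
    (hp : 1 ≤ p) (hf : MemLp f p) (a b : ℝ) : IntervalIntegrable f volume a b :=
  ⟨(hf.restrict _).integrable hp, (hf.restrict _).integrable hp⟩

theorem volume_sq_le_lt_top (r : ℝ) : volume {x : ℝ | x ^ 2 ≤ r} < ⊤ :=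
  (measure_mono fun _ hx => abs_le.1 (abs_le_sqrt hx)).trans_lt measure_Icc_lt_top

theorem exists_subseq_tendsto_of_integral_deriv_sq_le {f : ℕ → ℝ → ℝ} {c C : ℝ}
    (hf : ∀ n, LocallyAC (f n)) (hf' : ∀ n, MemLp (deriv (f n)) 2)
    (hC : ∀ n, ∫ x, deriv (f n) x ^ 2 ≤ C) (h0 : Tendsto (fun n => f n 0) atTop (𝓝 c)) :
    ∃ (F : ℝ → ℝ) (φ : ℕ → ℕ), StrictMono φ ∧ LocallyAC F ∧ MemLp (deriv F) 2 ∧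
      (∀ x, Tendsto (fun n => f (φ n) x) atTop (𝓝 (F x))) ∧
      ∀ w, MemLp w 2 → Tendsto (fun n => ∫ x, deriv (f (φ n)) x * w x) atTop
        (𝓝 (∫ x, deriv F x * w x)) := by
  obtain ⟨G, φ, hG, hφ, hweak⟩ := exists_subseq_tendsto_integral_mul hf' hC
  have hGint := intervalIntegrable_of_memLp one_le_two hG
  have hF : ∀ x, c + ∫ t in (0 : ℝ)..x, G t =
      (c + ∫ t in (0 : ℝ)..0, G t) + ∫ t in (0 : ℝ)..x, G t := by simp
  have hFG := deriv_ae_eq_of_eq_integral hGint hF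
  refine ⟨fun x => c + ∫ t in (0 : ℝ)..x, G t, φ, hφ, locallyAC_of_eq_integral hGint hF,
    (memLp_congr_ae hFG).2 hG, fun x => ?_, fun w hw => ?_⟩
  · simp only [fun n => (hf (φ n)).eq_add_integral_deriv 0 x]
    refine (h0.comp hφ.tendsto_atTop).add ?_
    simp only [intervalIntegral.intervalIntegral_eq_integral_uIoc]
    refine Tendsto.const_smul ?_ _
    have hind : MemLp ((uIoc 0 x).indicator fun _ => (1 : ℝ)) 2 volume :=
      memLp_indicator_const 2 measurableSet_uIoc 1 (Or.inr (by simp [uIoc]))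
    simpa only [← indicator_mul_right, mul_one, integral_indicator measurableSet_uIoc] using
      hweak _ hind
  · rw [integral_congr_ae (g := fun x => G x * w x) (hFG.mono fun x hx => by rw [hx])]
    exact hweak w hw

theorem MemEnergySpace.integrable_and_integral_sq_mul_pow_four_le {f : ℝ → ℝ} {B : ℝ}
    (hf : MemEnergySpace f) (hB : ∀ x, f x ^ 2 ≤ B) :
    Integrable (fun x => x ^ 2 * f x ^ 4) ∧
      ∫ x, x ^ 2 * f x ^ 4 ≤ B * ∫ x, (x * f x) ^ 2 := by
  have hle : ∀ x, x ^ 2 * f x ^ 4 ≤ B * (x * f x) ^ 2 := fun x =>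
    calc x ^ 2 * f x ^ 4 = f x ^ 2 * (x * f x) ^ 2 := by ring
      _ ≤ B * (x * f x) ^ 2 := mul_le_mul_of_nonneg_right (hB x) (sq_nonneg _)
  have hint := hf.memLp_id_mul.integrable_sq.const_mul B
  have hint4 : Integrable fun x => x ^ 2 * f x ^ 4 := hint.mono'
    ((continuous_pow 2).mul (hf.ac.continuous.pow 4)).aestronglyMeasurable
    (ae_of_all _ fun x => by rw [Real.norm_of_nonneg (by positivity)]; exact hle x)
  exact ⟨hint4, (integral_mono hint4 hint hle).trans_eq (integral_const_mul _ _)⟩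

theorem MemEnergySpace.integral_eq_of_tendsto {f : ℕ → ℝ → ℝ} {F : ℝ → ℝ} {D W q : ℝ}
    (hf : ∀ n, MemEnergySpace (f n)) (hnorm : ∀ n, ∫ x, f n x ^ 2 = 1)
    (hD : ∀ n, ∫ x, deriv (f n) x ^ 2 ≤ D) (hW : ∀ n, ∫ x, (x * f n x) ^ 2 ≤ W)
    (hq : Tendsto (fun n => ∫ x, f n x ^ 4) atTop (𝓝 q))
    (hlim : ∀ x, Tendsto (fun n => f n x) atTop (𝓝 (F x))) :
    ∫ x, F x ^ 2 = 1 ∧ ∫ x, F x ^ 4 = q := by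
  have hB : ∀ n x, f n x ^ 2 ≤ 1 + D := fun n x => by
    have := (hf n).ac.sq_le (hf n).memLp (hf n).memLp_deriv one_pos x
    rw [hnorm, div_one, one_mul] at this
    linarith [hD n]
  have hx4 := fun n => (hf n).integrable_and_integral_sq_mul_pow_four_le (hB n)
  constructor
  · refine integral_eq_of_tendsto_of_tight (by fun_prop) (fun x => sq_nonneg x)
      volume_sq_le_lt_top (fun n => (hf n).memLp.integrable_sq) (fun n => ?_)
      (fun n x => sq_nonneg _) hB (K := W) (fun n => ?_) (fun x => (hlim x).pow 2)
      (by simp [hnorm])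
    · simpa only [mul_pow] using (hf n).memLp_id_mul.integrable_sq
    · simpa only [mul_pow] using hW n
  · refine integral_eq_of_tendsto_of_tight (by fun_prop) (fun x => sq_nonneg x)
      volume_sq_le_lt_top (fun n => (hf n).integrable_pow_four) (fun n => (hx4 n).1)
      (fun n x => by positivity) (B := (1 + D) ^ 2) (fun n x => ?_) (K := (1 + D) * W)
      (fun n => (hx4 n).2.trans ?_) (fun x => (hlim x).pow 4) hq
    · calc f n x ^ 4 = (f n x ^ 2) ^ 2 := by ring
        _ ≤ (1 + D) ^ 2 := pow_le_pow_left₀ (sq_nonneg _) (hB n x) 2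
    · exact mul_le_mul_of_nonneg_left (hW n) ((sq_nonneg _).trans (hB 0 0))

theorem memEnergySpace_and_energy_le_of_tendsto {f : ℕ → ℝ → ℝ} {F : ℝ → ℝ} {d w q : ℝ}
    (hf : ∀ n, MemEnergySpace (f n)) (hnorm : ∀ n, ∫ x, f n x ^ 2 = 1)
    (hd : Tendsto (fun n => ∫ x, deriv (f n) x ^ 2) atTop (𝓝 d))
    (hw : Tendsto (fun n => ∫ x, (x * f n x) ^ 2) atTop (𝓝 w))
    (hq : Tendsto (fun n => ∫ x, f n x ^ 4) atTop (𝓝 q))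
    (hF : LocallyAC F) (hF' : MemLp (deriv F) 2)
    (hlim : ∀ x, Tendsto (fun n => f n x) atTop (𝓝 (F x)))
    (hweak : Tendsto (fun n => ∫ x, deriv (f n) x * deriv F x) atTop
      (𝓝 (∫ x, deriv F x * deriv F x))) (lam : ℝ) :
    MemEnergySpace F ∧ ∫ x, F x ^ 2 = 1 ∧ energy lam F ≤ d + w + lam / 2 * q := by
  obtain ⟨D, hD⟩ := hd.bddAbove_range
  obtain ⟨W, hW⟩ := hw.bddAbove_range
  obtain ⟨hmass, hquartic⟩ := MemEnergySpace.integral_eq_of_tendsto hf hnorm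
    (fun n => hD (mem_range_self n)) (fun n => hW (mem_range_self n)) hq hlim
  have hpotential := integrable_and_integral_le_of_tendsto
    (fun n => (hf n).memLp_id_mul.integrable_sq) (fun n x => sq_nonneg _)
    (fun x => ((hlim x).const_mul x).pow 2) (fun n => le_rfl) hw
  have hkinetic := integral_sq_le_of_tendsto_integral_mul (fun n => (hf n).memLp_deriv) hF' hweak
    (fun n => le_rfl) hd
  have hFmeas := hF.continuous.aestronglyMeasurable (μ := volume)
  refine ⟨⟨hF, (memLp_two_iff_integrable_sq hFmeas).2 (not_imp_comm.1 integral_undef ?_), hF',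
    (memLp_two_iff_integrable_sq (aestronglyMeasurable_id.mul hFmeas)).2 hpotential.1⟩,
    hmass, ?_⟩
  · simp [hmass]
  · unfold energy
    rw [hquartic]
    linarith [hpotential.2]

/-! ### Existence of a minimizer -/

/-- A real ground state: a minimizer of the energy among the functions of the energy space
with unit `L²` norm. -/
structure IsGroundState (lam : ℝ) (f : ℝ → ℝ) : Prop where
  mem : MemEnergySpace f
  integral_sq : ∫ x, f x ^ 2 = 1
  energy_le : ∀ g, MemEnergySpace g → ∫ x, g x ^ 2 = 1 → energy lam f ≤ energy lam g

theorem exists_bound_of_energy_le (lam C : ℝ) :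
    ∃ B, ∀ f, MemEnergySpace f → ∫ x, f x ^ 2 = 1 → energy lam f ≤ C →
      |f 0| ≤ B ∧ ∫ x, deriv f x ^ 2 ≤ B ∧ ∫ x, (x * f x) ^ 2 ≤ B ∧ ∫ x, f x ^ 4 ≤ B := by
  refine ⟨1 + 2 * (C + |lam| * (|lam| + 1) / 2), fun f hf hnorm hC => ?_⟩
  have hE := hf.le_energy hnorm lam
  have hD : 0 ≤ ∫ x, deriv f x ^ 2 := integral_nonneg fun x => sq_nonneg _
  have hW : 0 ≤ ∫ x, (x * f x) ^ 2 := integral_nonneg fun x => sq_nonneg _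
  have hsq := hf.ac.sq_le hf.memLp hf.memLp_deriv one_pos 0
  have hN := hf.integral_pow_four_le one_pos
  simp only [hnorm, div_one, one_mul, mul_one] at hsq hN
  refine ⟨?_, by linarith, by linarith, by linarith⟩
  have : |f 0| ≤ 1 + ∫ x, deriv f x ^ 2 :=
    abs_le_of_sq_le_sq (by nlinarith) (by linarith)
  linarith

theorem exists_isGroundState (lam : ℝ) : ∃ f, IsGroundState lam f := by
  set S := energy lam '' {f | MemEnergySpace f ∧ ∫ x, f x ^ 2 = 1}
  have hSbdd : BddBelow S := by
    refine ⟨-(|lam| * (|lam| + 1) / 2), ?_⟩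
    rintro _ ⟨f, ⟨hf, hnorm⟩, rfl⟩
    have hD : 0 ≤ ∫ x, deriv f x ^ 2 := integral_nonneg fun x => sq_nonneg _
    have hW : 0 ≤ ∫ x, (x * f x) ^ 2 := integral_nonneg fun x => sq_nonneg _
    linarith [hf.le_energy hnorm lam]
  obtain ⟨E, hEanti, hElim, hES⟩ :=
    exists_seq_tendsto_sInf (Nonempty.image _ exists_memEnergySpace_integral_sq_eq_one) hSbdd
  choose f hfS hfE using hES
  obtain ⟨B, hB⟩ := exists_bound_of_energy_le lam (E 0)
  replace hB := fun n => hB (f n) (hfS n).1 (hfS n).2 ((hfE n).trans_le (hEanti n.zero_le))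
  obtain ⟨⟨c, d, w, q⟩, -, φ, hφ, hlim⟩ :=
    (isCompact_Icc (a := ((-B, 0, 0, 0) : ℝ × ℝ × ℝ × ℝ)) (b := (B, B, B, B))).tendsto_subseq
      (x := fun n => (f n 0, ∫ x, deriv (f n) x ^ 2, ∫ x, (x * f n x) ^ 2, ∫ x, f n x ^ 4))
      fun n => ⟨⟨(abs_le.1 (hB n).1).1, integral_nonneg fun x => sq_nonneg _,
        integral_nonneg fun x => sq_nonneg _, integral_nonneg fun x => by positivity⟩,
        ⟨(abs_le.1 (hB n).1).2, (hB n).2⟩⟩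
  have hc := hlim.fst_nhds
  have hd := hlim.snd_nhds.fst_nhds
  have hw := hlim.snd_nhds.snd_nhds.fst_nhds
  have hq := hlim.snd_nhds.snd_nhds.snd_nhds
  obtain ⟨F, θ, hθ, hF, hF', hFlim, hweak⟩ := exists_subseq_tendsto_of_integral_deriv_sq_le
    (fun n => (hfS (φ n)).1.ac) (fun n => (hfS (φ n)).1.memLp_deriv)
    (fun n => (hB (φ n)).2.1) hc
  obtain ⟨hFmem, hFnorm, hFle⟩ := memEnergySpace_and_energy_le_of_tendsto
    (fun n => (hfS (φ (θ n))).1) (fun n => (hfS (φ (θ n))).2) (hd.comp hθ.tendsto_atTop)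
    (hw.comp hθ.tendsto_atTop) (hq.comp hθ.tendsto_atTop) hF hF' hFlim (hweak _ hF') lam
  have hinf : d + w + lam / 2 * q = sInf S := by
    refine tendsto_nhds_unique ((hd.add hw).add (hq.const_mul _)) ?_
    exact (funext fun n => hfE (φ n) : _ = E ∘ φ) ▸ hElim.comp hφ.tendsto_atTop
  exact ⟨F, hFmem, hFnorm, fun g hg hnorm =>
    (hFle.trans_eq hinf).trans (csInf_le hSbdd ⟨g, ⟨hg, hnorm⟩, rfl⟩)⟩

/-! ### The Euler–Lagrange equation -/

theorem exists_primitive_of_integral_eq_zero {a b : ℝ} {η : ℝ → ℝ} (hab : a ≤ b)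
    (hη : MemLp η 2 (volume.restrict (Ioc a b))) (hη0 : ∫ x in a..b, η x = 0) :
    ∃ φ, LocallyAC φ ∧ Function.support φ ⊆ Ioc a b ∧ φ b = 0 ∧
      deriv φ =ᵐ[volume] (Ioc a b).indicator η := by
  set g := (Ioc a b).indicator η
  have hg : MemLp g 2 := (memLp_indicator_iff_restrict measurableSet_Ioc).2 hη
  have hgint := intervalIntegrable_of_memLp one_le_two hg
  have hgb : ∫ t in a..b, g t = 0 := by
    rw [← hη0]
    refine intervalIntegral.integral_congr_ae (ae_of_all _ fun t ht => ?_)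
    exact indicator_of_mem (uIoc_of_le hab ▸ ht) _
  have hzero : ∀ {c x}, Disjoint (uIoc c x) (Ioc a b) → ∫ t in c..x, g t = 0 := fun hdisj =>
    intervalIntegral.integral_zero_ae (ae_of_all _ fun t ht =>
      indicator_of_notMem (disjoint_left.1 hdisj ht) _)
  have hprim : ∀ x, ∫ t in a..x, g t = (∫ t in a..a, g t) + ∫ t in a..x, g t := by simp
  refine ⟨fun x => ∫ t in a..x, g t, locallyAC_of_eq_integral hgint hprim, fun x hx => ?_, hgb,
    deriv_ae_eq_of_eq_integral hgint hprim⟩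
  by_contra hmem
  refine hx ?_
  rcases le_or_gt x a with hxa | hax
  · refine hzero (disjoint_left.2 fun t ht ht' => ?_)
    rw [uIoc_of_ge hxa] at ht
    exact ht.2.not_gt ht'.1
  · have hbx : b ≤ x := le_of_not_ge fun h => hmem ⟨hax, h⟩
    change ∫ t in a..x, g t = 0
    rw [← intervalIntegral.integral_add_adjacent_intervals (hgint a b) (hgint b x), hgb, zero_add]
    refine hzero (disjoint_left.2 fun t ht ht' => ?_)
    rw [uIoc_of_le hbx] at ht
    exact ht.1.not_ge ht'.2

theorem LocallyAC.setIntegral_mul_deriv_eq_neg {f φ : ℝ → ℝ} {a b : ℝ} (hf : LocallyAC f)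
    (hφ : LocallyAC φ) (hab : a ≤ b) (hsupp : Function.support φ ⊆ Ioc a b) (hφb : φ b = 0) :
    ∫ x in Ioc a b, f x * deriv φ x = -∫ x, deriv f x * φ x := by
  have hφa : φ a = 0 := Function.notMem_support.1 fun ha => (hsupp ha).1.false
  rw [← intervalIntegral.integral_of_le hab, (hf a b).integral_mul_deriv_eq_deriv_mul (hφ a b),
    intervalIntegral.integral_eq_integral_of_support_subset
      ((Function.support_mul_subset_right _ _).trans hsupp), hφa, hφb]
  simp

theorem exists_deriv_ae_eq_integral_add_const {f k : ℝ → ℝ} {a b : ℝ} (hab : a ≤ b)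
    (hf' : MemLp (deriv f) 2) (hk : Continuous k)
    (hweak : ∀ φ, LocallyAC φ → MemLp (deriv φ) 2 → HasCompactSupport φ →
      ∫ x, deriv f x * deriv φ x = -∫ x, k x * φ x) (x₀ : ℝ) :
    ∃ c, ∀ᵐ x ∂volume.restrict (Ioc a b), deriv f x = (∫ t in x₀..x, k t) + c := by
  set K : ℝ → ℝ := fun x => ∫ t in x₀..x, k t
  have hKderiv : deriv K = k := funext (Continuous.deriv_integral k hk x₀)
  have hK : LocallyAC K := locallyAC_of_eq_integral (a := x₀)
    (fun a b => hk.intervalIntegrable a b) fun x => by simp [K]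
  have hKmem : MemLp K 2 (volume.restrict (Ioc a b)) :=
    (memLp_two_iff_integrable_sq hK.continuous.aestronglyMeasurable).2
      (hK.continuous.pow 2).integrableOn_Ioc
  have hf'res := hf'.restrict (Ioc a b)
  -- Du Bois-Reymond: `f' - K` is orthogonal to every `η` of mean zero, because such an `η` is the
  -- derivative of a test function.
  suffices ∀ η, MemLp η 2 (volume.restrict (Ioc a b)) → ∫ x in Ioc a b, η x = 0 →
      ∫ x in Ioc a b, (deriv f x - K x) * η x = 0 from
    (ae_eq_const_of_integral_mul_eq_zero (hf'res.sub hKmem) this).imp fun c hc =>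
      hc.mono fun x hx => eq_add_of_sub_eq' hx
  intro η hη hη0
  rw [← intervalIntegral.integral_of_le hab] at hη0
  obtain ⟨φ, hφ, hφsupp, hφb, hφ'⟩ := exists_primitive_of_integral_eq_zero hab hη hη0
  have hφ'mem : MemLp (deriv φ) 2 :=
    (memLp_congr_ae hφ').2 ((memLp_indicator_iff_restrict measurableSet_Ioc).2 hη)
  have hφcomp : HasCompactSupport φ := .of_support_subset_isCompact isCompact_Icc
    (hφsupp.trans Ioc_subset_Icc_self)
  have hf'η : ∫ x in Ioc a b, deriv f x * η x = -∫ x, k x * φ x := by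
    rw [← hweak φ hφ hφ'mem hφcomp, ← integral_indicator measurableSet_Ioc]
    refine integral_congr_ae (hφ'.mono fun x hx => ?_)
    simp only [hx, indicator_mul_right]
  have hKη : ∫ x in Ioc a b, K x * η x = -∫ x, k x * φ x := by
    rw [← hKderiv, ← hK.setIntegral_mul_deriv_eq_neg hφ hab hφsupp hφb]
    refine setIntegral_congr_ae measurableSet_Ioc (hφ'.mono fun x hx hmem => ?_)
    rw [hx, indicator_of_mem hmem]
  simp only [sub_mul]
  have hsplit := integral_sub (hf'res.integrable_mul hη) (hKmem.integrable_mul hη)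
  simp only [Pi.mul_apply] at hsplit
  rw [hsplit, hf'η, hKη, sub_self]

theorem hasDerivAt_deriv_of_weak {f k : ℝ → ℝ} (hf : LocallyAC f)
    (hf' : MemLp (deriv f) 2) (hk : Continuous k)
    (hweak : ∀ φ, LocallyAC φ → MemLp (deriv φ) 2 → HasCompactSupport φ →
      ∫ x, deriv f x * deriv φ x = -∫ x, k x * φ x) (x₀ : ℝ) :
    DifferentiableAt ℝ f x₀ ∧ HasDerivAt (deriv f) (k x₀) x₀ := by
  set K : ℝ → ℝ := fun x => ∫ t in x₀..x, k t
  have hK : ∀ x, HasDerivAt K (k x) x := fun x => (hk.integral_hasStrictDerivAt x₀ x).hasDerivAt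
  have hKcont : Continuous K := continuous_iff_continuousAt.2 fun x => (hK x).continuousAt
  obtain ⟨c, hc⟩ := exists_deriv_ae_eq_integral_add_const
    (by linarith : x₀ - 1 ≤ x₀ + 1) hf' hk hweak x₀
  rw [ae_restrict_iff' measurableSet_Ioc] at hc
  have hnhds : Ioo (x₀ - 1) (x₀ + 1) ∈ 𝓝 x₀ := Ioo_mem_nhds (by linarith) (by linarith)
  have hfK : ∀ x ∈ Ioo (x₀ - 1) (x₀ + 1), f x = f x₀ + ∫ t in x₀..x, (K t + c) := fun x hx => by
    rw [hf.eq_add_integral_deriv x₀ x]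
    congr 1
    refine intervalIntegral.integral_congr_ae (hc.mono fun t ht htx => ht ?_)
    exact ⟨(lt_min (by linarith) hx.1).trans htx.1, htx.2.trans (max_le (by linarith) hx.2.le)⟩
  have hderiv : ∀ x ∈ Ioo (x₀ - 1) (x₀ + 1), HasDerivAt f (K x + c) x := fun x hx => by
    refine HasDerivAt.congr_of_eventuallyEq ?_ (eventually_of_mem (isOpen_Ioo.mem_nhds hx) hfK)
    exact ((hKcont.add continuous_const).integral_hasStrictDerivAt x₀ x).hasDerivAt.const_add _
  refine ⟨(hderiv x₀ (mem_of_mem_nhds hnhds)).differentiableAt, ?_⟩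
  exact ((hK x₀).add_const c).congr_of_eventuallyEq
    (eventually_of_mem hnhds fun x hx => (hderiv x hx).deriv)

theorem energy_const_mul (lam c : ℝ) (f : ℝ → ℝ) :
    energy lam (fun x => c * f x) =
      c ^ 2 * ((∫ x, deriv f x ^ 2) + ∫ x, (x * f x) ^ 2) + lam / 2 * (c ^ 4 * ∫ x, f x ^ 4) := by
  simp only [energy, deriv_const_mul_field, mul_left_comm _ c, mul_pow c, integral_const_mul]
  ring

theorem MemEnergySpace.hasDerivAt_integral_deriv_sq {f g : ℝ → ℝ} (hf : MemEnergySpace f)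
    (hg : MemEnergySpace g) :
    HasDerivAt (fun t => ∫ x, deriv (fun y => f y + t * g y) x ^ 2)
      (2 * ∫ x, deriv f x * deriv g x) 0 := by
  have hderiv : ∀ t : ℝ, ∫ x, deriv (fun y => f y + t * g y) x ^ 2 =
      ∫ x, (deriv f x + t * deriv g x) ^ 2 := fun t => by
    refine integral_congr_ae ?_
    filter_upwards [hf.ac.ae_differentiableAt, hg.ac.ae_differentiableAt] with x hfx hgx
    rw [deriv_fun_add hfx (hgx.const_mul t), deriv_const_mul t hgx]
  simpa [hderiv] using
    hasDerivAt_integral_add_mul_pow two_ne_zero hf.memLp_deriv hg.memLp_deriv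

namespace IsGroundState

variable {lam : ℝ} {f g : ℝ → ℝ}

theorem energy_mul_sq_le (hf : IsGroundState lam f) (hg : MemEnergySpace g)
    (hpos : 0 < ∫ x, g x ^ 2) :
    energy lam f * (∫ x, g x ^ 2) ^ 2 ≤
      (∫ x, g x ^ 2) * ((∫ x, deriv g x ^ 2) + ∫ x, (x * g x) ^ 2) +
        lam / 2 * ∫ x, g x ^ 4 := by
  set m := ∫ x, g x ^ 2
  have hle := hf.energy_le _ (hg.const_mul (√m)⁻¹) (integral_sq_normalize hpos)
  have h4 : (√m)⁻¹ ^ 4 = (m ^ 2)⁻¹ := by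
    rw [inv_pow, show √m ^ 4 = (√m ^ 2) ^ 2 by ring, sq_sqrt hpos.le]
  rw [energy_const_mul, inv_pow, sq_sqrt hpos.le, h4] at hle
  calc energy lam f * m ^ 2 ≤ _ := mul_le_mul_of_nonneg_right hle (sq_nonneg m)
    _ = _ := by field_simp

theorem exists_weak_euler_lagrange (hf : IsGroundState lam f) :
    ∃ κ, ∀ g, MemEnergySpace g →
      (∫ x, deriv f x * deriv g x) + (∫ x, x * f x * (x * g x)) + lam * ∫ x, f x ^ 3 * g x =
        κ * ∫ x, f x * g x := by
  refine ⟨2 * energy lam f - (∫ x, deriv f x ^ 2) - ∫ x, (x * f x) ^ 2, fun g hg => ?_⟩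
  have hmem : ∀ t : ℝ, MemEnergySpace fun x => f x + t * g x := fun t =>
    hf.mem.add (hg.const_mul t)
  have hM : HasDerivAt (fun t => ∫ x, (f x + t * g x) ^ 2) (2 * ∫ x, f x * g x) 0 := by
    simpa using hasDerivAt_integral_add_mul_pow two_ne_zero hf.mem.memLp hg.memLp
  have hD := hf.mem.hasDerivAt_integral_deriv_sq hg
  have hW : HasDerivAt (fun t => ∫ x, (x * (f x + t * g x)) ^ 2)
      (2 * ∫ x, x * f x * (x * g x)) 0 := by
    have hsplit : ∀ t x : ℝ, x * (f x + t * g x) = x * f x + t * (x * g x) := fun t x => by ring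
    simpa [hsplit] using
      hasDerivAt_integral_add_mul_pow two_ne_zero hf.mem.memLp_id_mul hg.memLp_id_mul
  have hN : HasDerivAt (fun t => ∫ x, (f x + t * g x) ^ 4) (4 * ∫ x, f x ^ 3 * g x) 0 := by
    simpa using hasDerivAt_integral_add_mul_pow four_ne_zero hf.mem.memLp_four hg.memLp_four
  -- With `m = ∫ u ^ 2` for `u = f + t g`, this is `m ^ 2` times the energy excess of `u / √m`.
  set J : ℝ → ℝ := fun t => (∫ x, (f x + t * g x) ^ 2) *
    ((∫ x, deriv (fun y => f y + t * g y) x ^ 2) + ∫ x, (x * (f x + t * g x)) ^ 2) +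
    lam / 2 * (∫ x, (f x + t * g x) ^ 4) - energy lam f * (∫ x, (f x + t * g x) ^ 2) ^ 2
  have hJ := ((hM.mul (hD.add hW)).add (hN.const_mul (lam / 2))).sub
    ((hM.pow 2).const_mul (energy lam f))
  have hJ0 : J 0 = 0 := by
    simp [J, hf.integral_sq, energy]
  have hmin : IsLocalMin J 0 := by
    have hpos : ∀ᶠ t in 𝓝 (0 : ℝ), 0 < ∫ x, (f x + t * g x) ^ 2 :=
      hM.continuousAt.eventually_const_lt (by simp [hf.integral_sq])
    filter_upwards [hpos] with t ht
    rw [hJ0]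
    exact sub_nonneg.2 (hf.energy_mul_sq_le (hmem t) ht)
  have hcrit := hmin.hasDerivAt_eq_zero hJ
  simp only [Pi.add_apply, zero_mul, add_zero, hf.integral_sq, one_mul, mul_one,
    one_pow, Nat.cast_ofNat] at hcrit
  linarith

end IsGroundState

theorem eq_zero_of_hasDerivAt_deriv {u q : ℝ → ℝ} {x₀ : ℝ} (hq : Continuous q)
    (hu : Differentiable ℝ u) (hu' : ∀ x, HasDerivAt (deriv u) (q x * u x) x)
    (h0 : u x₀ = 0) (h0' : deriv u x₀ = 0) (x : ℝ) : u x = 0 := by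
  set a := min x₀ x - 1
  set b := max x₀ x + 1
  have hx₀ : x₀ ∈ Ioo a b := ⟨(sub_one_lt _).trans_le (min_le_left _ _),
    (le_max_left _ _).trans_lt (lt_add_one _)⟩
  have hx : x ∈ Ioo a b := ⟨(sub_one_lt _).trans_le (min_le_right _ _),
    (le_max_right _ _).trans_lt (lt_add_one _)⟩
  obtain ⟨C, hC⟩ := isCompact_Icc.exists_bound_of_continuousOn (s := Icc a b) hq.continuousOn
  have hlip : ∀ t ∈ Ioo a b, LipschitzOnWith (max 1 C.toNNReal)
      (fun p : ℝ × ℝ => (p.2, q t * p.1)) univ := fun t ht => by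
    have hqt : LipschitzWith (‖q t‖₊ * 1) fun p : ℝ × ℝ => q t * p.1 :=
      (lipschitzWith_smul (q t)).comp LipschitzWith.prod_fst
    rw [mul_one] at hqt
    refine ((LipschitzWith.prod_snd.prodMk hqt).weaken (max_le_max le_rfl ?_)).lipschitzOnWith
    exact NNReal.coe_le_coe.1 ((hC t (Ioo_subset_Icc_self ht)).trans (le_coe_toNNReal C))
  have heq := ODE_solution_unique_of_mem_Ioo hlip hx₀
    (f := fun t => (u t, deriv u t)) (g := fun _ => 0)
    (fun t _ => ⟨(hu t).hasDerivAt.prodMk (hu' t), mem_univ _⟩)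
    (fun t _ => ⟨by
      rw [Prod.fst_zero, Prod.snd_zero, mul_zero]; exact hasDerivAt_const t _, mem_univ _⟩)
    (Prod.ext h0 h0')
  exact congr_arg Prod.fst (heq hx)

namespace IsGroundState

variable {lam : ℝ} {f : ℝ → ℝ}

theorem exists_euler_lagrange (hf : IsGroundState lam f) :
    ∃ κ, Differentiable ℝ f ∧
      ∀ x, HasDerivAt (deriv f) ((x ^ 2 + lam * f x ^ 2 - κ) * f x) x := by
  obtain ⟨κ, hκ⟩ := hf.exists_weak_euler_lagrange
  have hfc := hf.mem.ac.continuous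
  have hk : Continuous fun x => (x ^ 2 + lam * f x ^ 2 - κ) * f x := by fun_prop
  suffices ∀ φ, LocallyAC φ → MemLp (deriv φ) 2 → HasCompactSupport φ →
      ∫ x, deriv f x * deriv φ x = -∫ x, (x ^ 2 + lam * f x ^ 2 - κ) * f x * φ x from
    ⟨κ, fun x => (hasDerivAt_deriv_of_weak hf.mem.ac hf.mem.memLp_deriv hk this x).1,
      fun x => (hasDerivAt_deriv_of_weak hf.mem.ac hf.mem.memLp_deriv hk this x).2⟩
  intro φ hφ hφ' hsupp
  have hint : ∀ w : ℝ → ℝ, Continuous w → Integrable fun x => w x * φ x := fun w hw =>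
    (hw.mul hφ.continuous).integrable_of_hasCompactSupport hsupp.mul_left
  have hx : Integrable fun x => x * f x * x * φ x := hint _ (by fun_prop)
  have hquartic : Integrable fun x => lam * (f x ^ 3 * φ x) := (hint _ (by fun_prop)).const_mul lam
  have hmass : Integrable fun x => κ * (f x * φ x) := (hint _ hfc).const_mul κ
  have hweak := hκ φ (hφ.memEnergySpace_of_hasCompactSupport hφ' hsupp)
  have hsplit : ∫ x, (x ^ 2 + lam * f x ^ 2 - κ) * f x * φ x =
      (∫ x, x * f x * x * φ x) + lam * (∫ x, f x ^ 3 * φ x) - κ * ∫ x, f x * φ x := by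
    rw [← integral_const_mul, ← integral_const_mul, ← integral_add hx hquartic,
      ← integral_sub (f := fun x => _ + _) (hx.add hquartic) hmass]
    exact integral_congr_ae (ae_of_all _ fun x => by ring)
  simp only [← mul_assoc] at hweak
  linarith

theorem abs (hf : IsGroundState lam f) : IsGroundState lam fun x => |f x| where
  mem := hf.mem.abs
  integral_sq := by simpa only [sq_abs] using hf.integral_sq
  energy_le g hg hnorm := by
    refine le_trans ?_ (hf.energy_le g hg hnorm)
    have hD : ∫ x, deriv (fun y => |f y|) x ^ 2 ≤ ∫ x, deriv f x ^ 2 :=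
      integral_mono_ae hf.mem.abs.memLp_deriv.integrable_sq hf.mem.memLp_deriv.integrable_sq
        (hf.mem.norm_deriv_abs_le.mono fun x hx => sq_le_sq.2 hx)
    simpa only [energy, mul_pow, sq_abs, Even.pow_abs (by decide : Even 4), add_le_add_iff_right]

theorem pos_of_nonneg (hf : IsGroundState lam f) (hnonneg : ∀ x, 0 ≤ f x) (x : ℝ) : 0 < f x := by
  refine (hnonneg x).lt_of_ne' fun hx => ?_
  obtain ⟨κ, hfd, hf'⟩ := hf.exists_euler_lagrange
  have hmin : IsLocalMin f x := Eventually.of_forall fun y => hx ▸ hnonneg y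
  have hzero := eq_zero_of_hasDerivAt_deriv (by have := hfd.continuous; fun_prop) hfd hf' hx
    hmin.deriv_eq_zero
  simpa [hzero] using hf.integral_sq

end IsGroundState

theorem exists_isGroundState_pos (lam : ℝ) : ∃ f, IsGroundState lam f ∧ ∀ x, 0 < f x := by
  obtain ⟨f, hf⟩ := exists_isGroundState lam
  exact ⟨_, hf.abs, hf.abs.pos_of_nonneg fun x => abs_nonneg (f x)⟩

/-! ### Polarization -/

/-- The polarization (two-point rearrangement) of `u` at `h`: of the two values of `u` at points
exchanged by the reflection `x ↦ 2 * h - x`, the larger one is put to the left of `h`. -/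
noncomputable def polarization (h : ℝ) (u : ℝ → ℝ) (x : ℝ) : ℝ :=
  if x < h then max (u x) (u (2 * h - x)) else min (u x) (u (2 * h - x))

section Polarization

variable {h : ℝ} {u : ℝ → ℝ} {x : ℝ}

theorem polarization_of_lt (hx : x < h) :
    polarization h u x = max (u x) (u (2 * h - x)) := if_pos hx

theorem polarization_of_ge (hx : h ≤ x) :
    polarization h u x = min (u x) (u (2 * h - x)) := if_neg hx.not_gt

theorem polarization_eq_or (h : ℝ) (u : ℝ → ℝ) (x : ℝ) :
    polarization h u x = u x ∨ polarization h u x = u (2 * h - x) := by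
  unfold polarization
  split_ifs
  exacts [max_choice _ _, min_choice _ _]

theorem polarization_add_polarization_reflect (h : ℝ) (u : ℝ → ℝ) (x : ℝ) :
    polarization h u x + polarization h u (2 * h - x) = u x + u (2 * h - x) := by
  rcases lt_trichotomy x h with hx | rfl | hx
  · rw [polarization_of_lt hx, polarization_of_ge (by linarith), sub_sub_cancel, min_comm,
      max_add_min]
  · simp [polarization, two_mul]
  · rw [polarization_of_ge hx.le, polarization_of_lt (by linarith), sub_sub_cancel, max_comm,
      min_add_max]

theorem polarization_sq_add_polarization_sq_reflect (h : ℝ) (u : ℝ → ℝ) (x : ℝ) :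
    polarization h u x ^ 2 + polarization h u (2 * h - x) ^ 2 =
      u x ^ 2 + u (2 * h - x) ^ 2 := by
  have hsum := polarization_add_polarization_reflect h u x
  rcases polarization_eq_or h u x with hx | hx
  · rw [hx, show polarization h u (2 * h - x) = u (2 * h - x) by linarith]
  · rw [hx, show polarization h u (2 * h - x) = u x by linarith, add_comm]

theorem locallyAC_polarization (hu : LocallyAC u) (h : ℝ) : LocallyAC (polarization h u) :=
  (hu.max (hu.comp_const_sub (2 * h))).ite_lt (hu.min (hu.comp_const_sub (2 * h)))
    (by simp [two_mul])

theorem exists_measurePreserving_polarization_eq (hu : Measurable u)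
    (hw : Measurable (polarization h u)) :
    ∃ τ : ℝ → ℝ, MeasurePreserving τ ∧ (∀ x, polarization h u x = u (τ x)) ∧
      ∀ x, τ x = x ∨ τ x = 2 * h - x := by
  classical
  set s := {x | polarization h u x = u x}ᶜ
  have hs : (fun x => 2 * h - x) ⁻¹' s = s := by
    ext x
    have hsum := polarization_add_polarization_reflect h u x
    simp only [s, mem_preimage, mem_compl_iff, mem_ofPred_eq, not_iff_not]
    constructor <;> intro hx <;> linarith
  refine ⟨s.piecewise (fun x => 2 * h - x) id, measurePreserving_piecewise_id
    (Measure.measurePreserving_sub_left volume (2 * h)) (measurableSet_eq_fun hw hu).compl hs,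
    fun x => ?_, fun x => ?_⟩ <;> by_cases hx : polarization h u x = u x
  · simp [s, piecewise, hx]
  · simpa [s, piecewise, hx] using (polarization_eq_or h u x).resolve_left hx
  · simp [s, piecewise, hx]
  · simp [s, piecewise, hx]

theorem sq_deriv_eq_of_touching {u w : ℝ → ℝ} {x y : ℝ} (hw : DifferentiableAt ℝ w x)
    (hu : DifferentiableAt ℝ u x) (huh : DifferentiableAt ℝ u (2 * h - x))
    (hy : y = x ∨ y = 2 * h - x) (hxy : w x = u y)
    (hle : (∀ᶠ z in 𝓝 x, u z ≤ w z ∧ u (2 * h - z) ≤ w z) ∨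
      ∀ᶠ z in 𝓝 x, w z ≤ u z ∧ w z ≤ u (2 * h - z)) :
    deriv w x ^ 2 = deriv u y ^ 2 := by
  rcases hy with rfl | rfl
  · rcases hle with hle | hle
    · rw [deriv_eq_of_eventually_le hu hw (hle.mono fun _ => And.left) hxy.symm]
    · rw [deriv_eq_of_eventually_le hw hu (hle.mono fun _ => And.left) hxy]
  · have hur : DifferentiableAt ℝ (fun z => u (2 * h - z)) x :=
      huh.comp x (differentiableAt_id.const_sub _)
    have hderiv : deriv w x = deriv (fun z => u (2 * h - z)) x := by
      rcases hle with hle | hle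
      · exact (deriv_eq_of_eventually_le hur hw (hle.mono fun _ => And.right) hxy.symm).symm
      · exact deriv_eq_of_eventually_le hw hur (hle.mono fun _ => And.right) hxy
    rw [hderiv, deriv_comp_const_sub, neg_sq]

theorem ae_sq_deriv_polarization (hu : LocallyAC u) {τ : ℝ → ℝ}
    (hτ : ∀ x, polarization h u x = u (τ x)) (hτ' : ∀ x, τ x = x ∨ τ x = 2 * h - x) :
    ∀ᵐ x, deriv (polarization h u) x ^ 2 = deriv u (τ x) ^ 2 := by
  filter_upwards [hu.ae_differentiableAt, (locallyAC_polarization hu h).ae_differentiableAt,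
    (Measure.measurePreserving_sub_left volume (2 * h)).quasiMeasurePreserving.ae
      hu.ae_differentiableAt,
    ae_iff.2 (by simp : volume {x | ¬ x ≠ h} = 0)] with x hux hwx hurx hxh
  refine sq_deriv_eq_of_touching hwx hux hurx (hτ' x) (hτ x) ?_
  rcases lt_or_gt_of_ne hxh with hx | hx
  · exact .inl (eventually_of_mem (Iio_mem_nhds hx) fun z hz => by simp [polarization_of_lt hz])
  · refine .inr (eventually_of_mem (Ioi_mem_nhds hx) fun z hz => ?_)
    simp [polarization_of_ge (le_of_lt hz)]

end Polarization

namespace MemEnergySpace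

variable {u : ℝ → ℝ}

theorem comp_const_sub (hu : MemEnergySpace u) (c : ℝ) : MemEnergySpace fun x => u (c - x) := by
  have hσ := Measure.measurePreserving_sub_left volume c
  refine ⟨hu.ac.comp_const_sub c, hu.memLp.comp_measurePreserving hσ, ?_, ?_⟩
  · simp only [funext (deriv_comp_const_sub u c)]
    exact (hu.memLp_deriv.comp_measurePreserving hσ).neg
  · refine (memLp_congr_ae (ae_of_all _ fun x => ?_)).2
      (((hu.memLp.comp_measurePreserving hσ).const_mul c).sub
        (hu.memLp_id_mul.comp_measurePreserving hσ))
    exact (by ring : x * u (c - x) = c * u (c - x) - (c - x) * u (c - x))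

end MemEnergySpace

section Polarization

variable {u : ℝ → ℝ} {h : ℝ}

theorem memEnergySpace_polarization (hu : MemEnergySpace u) (h : ℝ) :
    MemEnergySpace (polarization h u) := by
  have hw := locallyAC_polarization hu.ac h
  obtain ⟨τ, hτ, hwτ, hτ'⟩ := exists_measurePreserving_polarization_eq
    hu.ac.continuous.measurable hw.continuous.measurable
  refine ⟨hw, ?_, ?_, ?_⟩
  · rw [funext hwτ]
    exact hu.memLp.comp_measurePreserving hτ
  · refine (hu.memLp_deriv.comp_measurePreserving hτ).mono (aestronglyMeasurable_deriv _ _) ?_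
    filter_upwards [ae_sq_deriv_polarization hu.ac hwτ hτ'] with x hx
    exact (sq_eq_sq_iff_abs_eq_abs _ _).1 hx |>.le
  · refine (hu.memLp_id_mul.abs.add (hu.comp_const_sub (2 * h)).memLp_id_mul.abs).mono
      (aestronglyMeasurable_id.mul hw.continuous.aestronglyMeasurable) (ae_of_all _ fun x => ?_)
    refine le_trans ?_ (le_abs_self _)
    rcases polarization_eq_or h u x with hx | hx <;> simp [hx, mul_nonneg]

theorem integral_comp_polarization (hu : Continuous u) (hw : Continuous (polarization h u))
    {g : ℝ → ℝ} (hg : Continuous g) :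
    ∫ x, g (polarization h u x) = ∫ x, g (u x) := by
  obtain ⟨τ, hτ, hwτ, -⟩ := exists_measurePreserving_polarization_eq hu.measurable hw.measurable
  simp only [hwτ]
  exact integral_comp_of_measurePreserving hτ (hg.comp hu).aestronglyMeasurable

theorem integral_sq_deriv_polarization (hu : LocallyAC u) :
    ∫ x, deriv (polarization h u) x ^ 2 = ∫ x, deriv u x ^ 2 := by
  obtain ⟨τ, hτ, hwτ, hτ'⟩ := exists_measurePreserving_polarization_eq
    hu.continuous.measurable (locallyAC_polarization hu h).continuous.measurable
  rw [integral_congr_ae (ae_sq_deriv_polarization hu hwτ hτ')]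
  exact integral_comp_of_measurePreserving hτ ((aestronglyMeasurable_deriv u volume).pow 2)

theorem sub_mul_sq_sub_polarization_sq_nonneg (hu : ∀ x, 0 ≤ u x) (x : ℝ) :
    0 ≤ (x - h) * (u x ^ 2 - polarization h u x ^ 2) := by
  rcases lt_or_ge x h with hx | hx
  · rw [polarization_of_lt hx]
    exact mul_nonneg_of_nonpos_of_nonpos (sub_nonpos.2 hx.le)
      (sub_nonpos.2 (pow_le_pow_left₀ (hu x) (le_max_left _ _) 2))
  · rw [polarization_of_ge hx]
    exact mul_nonneg (sub_nonneg.2 hx)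
      (sub_nonneg.2 (pow_le_pow_left₀ (le_min (hu _) (hu _)) (min_le_left _ _) 2))

theorem integral_id_mul_polarization_sq_lt (hu : MemEnergySpace u) (hu0 : ∀ x, 0 ≤ u x)
    (hh : 0 < h) {x₀ : ℝ} (hx₀ : x₀ < h) (hlt : u x₀ < u (2 * h - x₀)) :
    ∫ x, (x * polarization h u x) ^ 2 < ∫ x, (x * u x) ^ 2 := by
  have hw := memEnergySpace_polarization hu h
  set G : ℝ → ℝ := fun x => (x * u x) ^ 2 - (x * polarization h u x) ^ 2
  set F : ℝ → ℝ := fun x => 4 * h * ((x - h) * (u x ^ 2 - polarization h u x ^ 2))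
  have hG : Integrable G := hu.memLp_id_mul.integrable_sq.sub hw.memLp_id_mul.integrable_sq
  have hFG : F = fun x => G x + G (2 * h - x) := by
    ext x
    simp only [F, G]
    linear_combination (2 * h - x) ^ 2 * polarization_sq_add_polarization_sq_reflect h u x
  have hF : Integrable F := hFG ▸ hG.add (hG.comp_sub_left (2 * h))
  have hFint : ∫ x, F x = 2 * ∫ x, G x := by
    rw [hFG, integral_add hG (hG.comp_sub_left (2 * h)), integral_sub_left_eq_self G volume,
      two_mul]
  have hFc : Continuous F := by
    have := hu.ac.continuous
    have := hw.ac.continuous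
    fun_prop
  have hF0 : F x₀ ≠ 0 := by
    have hsq : u x₀ ^ 2 < polarization h u x₀ ^ 2 := by
      rw [polarization_of_lt hx₀, max_eq_right hlt.le]
      exact pow_lt_pow_left₀ hlt (hu0 x₀) two_ne_zero
    exact mul_ne_zero (by positivity) (mul_ne_zero (sub_neg.2 hx₀).ne (sub_neg.2 hsq).ne)
  have hpos : 0 < ∫ x, F x := integral_pos_of_integrable_nonneg_nonzero hFc hF
    (fun x => mul_nonneg (by positivity) (sub_mul_sq_sub_polarization_sq_nonneg hu0 x)) hF0
  rw [hFint, integral_sub hu.memLp_id_mul.integrable_sq hw.memLp_id_mul.integrable_sq] at hpos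
  linarith

theorem energy_polarization_lt (hu : MemEnergySpace u) (hu0 : ∀ x, 0 ≤ u x) (hh : 0 < h)
    {x : ℝ} (hx : x < h) (hlt : u x < u (2 * h - x)) (lam : ℝ) :
    energy lam (polarization h u) < energy lam u := by
  have hw := (locallyAC_polarization hu.ac h).continuous
  have hpot := integral_id_mul_polarization_sq_lt hu hu0 hh hx hlt
  simp only [energy, integral_sq_deriv_polarization hu.ac,
    integral_comp_polarization hu.ac.continuous hw (continuous_pow 4)]
  gcongr

end Polarization

namespace IsGroundState

variable {lam : ℝ} {f : ℝ → ℝ}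

theorem apply_reflect_le (hf : IsGroundState lam f) (hf0 : ∀ x, 0 ≤ f x) {h x : ℝ} (hh : 0 < h)
    (hx : x < h) : f (2 * h - x) ≤ f x := by
  by_contra! hlt
  have hnorm := integral_comp_polarization hf.mem.ac.continuous
    (locallyAC_polarization hf.mem.ac h).continuous (continuous_pow 2)
  exact (energy_polarization_lt hf.mem hf0 hh hx hlt lam).not_ge
    (hf.energy_le _ (memEnergySpace_polarization hf.mem h) (hnorm.trans hf.integral_sq))

theorem comp_neg (hf : IsGroundState lam f) : IsGroundState lam fun x => f (-x) where
  mem := by simpa only [zero_sub] using hf.mem.comp_const_sub 0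
  integral_sq := (integral_neg_eq_self (fun x => f x ^ 2) volume).trans hf.integral_sq
  energy_le g hg hnorm := by
    refine le_of_eq_of_le ?_ (hf.energy_le g hg hnorm)
    have hD := integral_neg_eq_self (fun x => deriv f x ^ 2) volume
    have hV := integral_neg_eq_self (fun x => (x * f x) ^ 2) volume
    have hN := integral_neg_eq_self (fun x => f x ^ 4) volume
    simp only [neg_mul, neg_sq] at hV
    simp only [energy, deriv_comp_neg, neg_sq, hD, hV, hN]

theorem apply_le_apply_neg (hf : IsGroundState lam f) (hf0 : ∀ x, 0 ≤ f x) {x : ℝ} (hx : 0 < x) :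
    f x ≤ f (-x) := by
  have hc := hf.mem.ac.continuous
  have hlim : Tendsto (fun h => f (2 * h + x)) (𝓝[>] 0) (𝓝 (f x)) :=
    tendsto_nhdsWithin_of_tendsto_nhds (Continuous.tendsto' (by fun_prop) _ _ (by simp))
  refine le_of_tendsto hlim ?_
  filter_upwards [self_mem_nhdsWithin] with h (hh : 0 < h)
  simpa using hf.apply_reflect_le hf0 hh (show -x < h by linarith)

theorem apply_neg_eq (hf : IsGroundState lam f) (hf0 : ∀ x, 0 ≤ f x) (x : ℝ) : f (-x) = f x := by
  have hpos : ∀ y, 0 < y → f (-y) = f y := fun y hy => le_antisymm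
    (by simpa using hf.comp_neg.apply_le_apply_neg (fun z => hf0 (-z)) hy)
    (hf.apply_le_apply_neg hf0 hy)
  rcases lt_trichotomy x 0 with hx | rfl | hx
  · simpa using (hpos (-x) (neg_pos.2 hx)).symm
  · rw [neg_zero]
  · exact hpos x hx

theorem antitoneOn (hf : IsGroundState lam f) (hf0 : ∀ x, 0 ≤ f x) : AntitoneOn f (Ici 0) := by
  intro x hx y _ hxy
  rcases hxy.eq_or_lt with rfl | hlt
  · rfl
  · have hx : 0 ≤ x := hx
    have := hf.apply_reflect_le hf0 (h := (x + y) / 2) (x := x) (by linarith) (by linarith)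
    rwa [mul_div_cancel₀ _ two_ne_zero, add_sub_cancel_left] at this

end IsGroundState

/-! ### Complex-valued wave functions -/

section Complex

variable {ψ : ℝ → ℂ} {u : ℝ → ℝ}

theorem norm_deriv_norm_le (hψ : Differentiable ℝ ψ) (x : ℝ) :
    ‖deriv (fun y => ‖ψ y‖) x‖ ≤ ‖deriv ψ x‖ :=
  norm_deriv_le_of_norm_sub_le (hψ x) fun y => abs_norm_sub_norm_le (ψ y) (ψ x)

theorem memEnergySpace_norm (hψ : InX ψ) : MemEnergySpace fun x => ‖ψ x‖ := by
  obtain ⟨hd, h2, hd2, hV, -⟩ := hψ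
  have hd' : MemLp (deriv ψ) 2 :=
    (memLp_two_iff_integrable_sq_norm (aestronglyMeasurable_deriv _ _)).2 hd2
  have hac := locallyAC_norm hd (intervalIntegrable_of_memLp one_le_two hd')
  refine ⟨hac, ?_, hd'.mono (aestronglyMeasurable_deriv _ _)
    (ae_of_all _ (norm_deriv_norm_le hd)), ?_⟩
  · exact (memLp_two_iff_integrable_sq hac.continuous.aestronglyMeasurable).2 h2
  · refine (memLp_two_iff_integrable_sq (aestronglyMeasurable_id.mul
      hac.continuous.aestronglyMeasurable)).2 (hV.congr (ae_of_all _ fun x => ?_))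
    exact (mul_pow x ‖ψ x‖ 2).symm

theorem energy_norm_le_energy0 (hψ : InX ψ) (lam : ℝ) :
    energy lam (fun x => ‖ψ x‖) ≤ energy0 lam ψ := by
  simp only [energy, energy0, mul_pow]
  gcongr ?_ + _ + _
  refine integral_mono (memEnergySpace_norm hψ).memLp_deriv.integrable_sq hψ.2.2.1 fun x => ?_
  rw [sq_le_sq, abs_norm]
  exact norm_deriv_norm_le hψ.1 x

theorem norm_deriv_ofReal_comp (hu : Differentiable ℝ u) (x : ℝ) :
    ‖deriv (fun y => (u y : ℂ)) x‖ = |deriv u x| := by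
  rw [(hu x).hasDerivAt.ofReal_comp.deriv, Complex.norm_real, Real.norm_eq_abs]

theorem MemEnergySpace.inX_ofReal (hu : MemEnergySpace u) (hd : Differentiable ℝ u) :
    InX fun x => (u x : ℂ) := by
  refine ⟨fun x => (hd x).hasDerivAt.ofReal_comp.differentiableAt, ?_, ?_, ?_, ?_⟩ <;>
    simp only [norm_deriv_ofReal_comp hd, Complex.norm_real, Real.norm_eq_abs, sq_abs,
      Even.pow_abs (by decide : Even 4), ← mul_pow]
  exacts [hu.memLp.integrable_sq, hu.memLp_deriv.integrable_sq, hu.memLp_id_mul.integrable_sq,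
    hu.integrable_pow_four]

theorem energy0_ofReal (hu : Differentiable ℝ u) (lam : ℝ) :
    energy0 lam (fun x => (u x : ℂ)) = energy lam u := by
  simp only [energy, energy0, norm_deriv_ofReal_comp hu, Complex.norm_real, Real.norm_eq_abs,
    sq_abs, mul_pow, Even.pow_abs (by decide : Even 4)]

end Complex

end GroundState

theorem exists_symmetric_decreasing_ground_state (lam : ℝ) :
    ∃ ψmin : ℝ → ℝ,
      (∀ ξ : ℝ, 0 < ψmin ξ) ∧ (∀ ξ : ℝ, ψmin (-ξ) = ψmin ξ) ∧
      AntitoneOn ψmin (Set.Ici (0 : ℝ)) ∧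
      InSigma1 (fun ξ => (ψmin ξ : ℂ)) ∧
      (∀ ψ : ℝ → ℂ, InSigma1 ψ →
        energy0 lam (fun ξ => (ψmin ξ : ℂ)) ≤ energy0 lam ψ) ∧
      (∀ ξ : ℝ, ψmin ξ ≤ ψmin 0) := by
  obtain ⟨f, hf, hpos⟩ := GroundState.exists_isGroundState_pos lam
  obtain ⟨κ, hfd, -⟩ := hf.exists_euler_lagrange
  have hf0 := fun x => (hpos x).le
  have heven := hf.apply_neg_eq hf0
  have hanti := hf.antitoneOn hf0
  refine ⟨f, hpos, heven, hanti, ⟨hf.mem.inX_ofReal hfd, ?_⟩, fun ψ hψ => ?_, fun ξ => ?_⟩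
  · simpa only [Complex.norm_real, Real.norm_eq_abs, sq_abs] using hf.integral_sq
  · calc energy0 lam (fun ξ => (f ξ : ℂ))
        = GroundState.energy lam f := GroundState.energy0_ofReal hfd lam
      _ ≤ GroundState.energy lam fun ξ => ‖ψ ξ‖ :=
          hf.energy_le _ (GroundState.memEnergySpace_norm hψ.1) hψ.2
      _ ≤ energy0 lam ψ := GroundState.energy_norm_le_energy0 hψ.1 lam
  · have habs : f |ξ| = f ξ := by rcases abs_choice ξ with h | h <;> simp only [h, heven]
    exact habs ▸ hanti Set.self_mem_Ici (abs_nonneg ξ) (abs_nonneg ξ)
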